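/- Let r ≥ 3, ε > 0 and n sufficiently large, and let G be an edge-coloured graph on n vertices with minimum colour degree at least (1 − 1/(2(r−1)) + ε)n. Then for every pair of distinct vertices x, y there exist at least ηn^{r−1} ordered (r−1)-tuples (v_1, …, v_{r−1}) of vertices, where η > 0 depends only on ε and r, such that both {x, v_1, …, v_{r−1}} and {y, v_1, …, v_{r−1}} induce rainbow copies of K_r in G. -/

import Mathlib

/-- `S` spans a rainbow copy of `K_r` in the edge-coloured graph `(G, c)`. -/
def RainbowClique {n : ℕ} (G : SimpleGraph (Fin n)) (c : Fin n → Fin n → ℕ) (r : ℕ)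
    (S : Finset (Fin n)) : Prop :=
  S.card = r ∧ (∀ a ∈ S, ∀ b ∈ S, a ≠ b → G.Adj a b) ∧
    ∀ a ∈ S, ∀ b ∈ S, ∀ a' ∈ S, ∀ b' ∈ S, a ≠ b → a' ≠ b' →
      ({a, b} : Finset (Fin n)) ≠ {a', b'} → c a b ≠ c a' b'

/-!
Choose at each vertex `v` a rainbow star `O v` with one leaf for each colour at `v`; it misses at
most `(1 / (2 (r - 1)) - ε) n` vertices. Dropping the colours of the edges from `v` to `x` and `y`
costs two more vertices, and the trimmed stars form a dense digraph. The connector is built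
greedily: pick `v` in the current set `W` of candidates, and keep as candidates those `w ∈ W` joined
to `v` in both directions of the digraph. By averaging, linearly many `v ∈ W` lose at most about
twice as many candidates as one star misses, so `W` lasts for all `r - 1` rounds. Trimming makes the
edges from a new vertex to each of the two cliques rainbow, and only boundedly many `v` repeat a
colour already present.
-/

open Finset

section Counting

variable {V : Type*}

theorem sum_card_filter_not_mutual_le (R : V → V → Prop) [DecidableRel R] {W : Finset V} {a : ℕ}
    (hR : ∀ v ∈ W, #{w ∈ W | ¬ R v w} ≤ a) :
    ∑ v ∈ W, #{w ∈ W | ¬ (R v w ∧ R w v)} ≤ #W * (2 * a) := by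
  classical
  have out_le : ∑ v ∈ W, #{w ∈ W | ¬ R v w} ≤ #W * a := sum_le_card_nsmul W _ a hR
  have in_eq_out : ∑ v ∈ W, #{w ∈ W | ¬ R w v} = ∑ v ∈ W, #{w ∈ W | ¬ R v w} :=
    (sum_card_bipartiteAbove_eq_sum_card_bipartiteBelow (fun v w => ¬ R v w)).symm
  calc
    ∑ v ∈ W, #{w ∈ W | ¬ (R v w ∧ R w v)}
      ≤ ∑ v ∈ W, (#{w ∈ W | ¬ R v w} + #{w ∈ W | ¬ R w v}) := by
        gcongr with v
        simp only [not_and_or, filter_or]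
        exact card_union_le _ _
    _ ≤ #W * (2 * a) := by rw [sum_add_distrib, in_eq_out]; linarith

theorem le_card_filter_le_card_mutual (R : V → V → Prop) [DecidableRel R] {W : Finset V}
    {a d L : ℕ} (hR : ∀ v ∈ W, #{w ∈ W | ¬ R v w} ≤ a) (hW : d + L ≤ #W) :
    d ≤ #{v ∈ W | L ≤ #{w ∈ W | R v w ∧ R w v} + 2 * a} := by
  set good := {v ∈ W | L ≤ #{w ∈ W | R v w ∧ R w v} + 2 * a}
  set bad := {v ∈ W | ¬ L ≤ #{w ∈ W | R v w ∧ R w v} + 2 * a}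
  have good_add_bad : #good + #bad = #W := card_filter_add_card_filter_not _
  have nonmutual_ge : ∀ v ∈ bad, 2 * a + d ≤ #{w ∈ W | ¬ (R v w ∧ R w v)} := by
    intro v hv
    have hsplit := card_filter_add_card_filter_not (s := W) (fun w => R v w ∧ R w v)
    have hfew := (mem_filter.1 hv).2
    omega
  rcases bad.eq_empty_or_nonempty with hempty | ⟨v, hv⟩
  · rw [hempty, card_empty] at good_add_bad
    omega
  have hlarge : 2 * a + d ≤ #W := (nonmutual_ge v hv).trans (card_filter_le _ _)
  have hbad_le : #bad * (2 * a + d) ≤ #W * (2 * a) :=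
    calc
      #bad * (2 * a + d) ≤ ∑ v ∈ bad, #{w ∈ W | ¬ (R v w ∧ R w v)} :=
        card_nsmul_le_sum bad _ _ nonmutual_ge
      _ ≤ ∑ v ∈ W, #{w ∈ W | ¬ (R v w ∧ R w v)} :=
        sum_le_sum_of_subset (filter_subset _ _)
      _ ≤ #W * (2 * a) := sum_card_filter_not_mutual_le R hR
  have hpos : 0 < #W := card_pos.2 ⟨v, (mem_filter.1 hv).1⟩
  refine Nat.le_of_mul_le_mul_left ?_ hpos
  nlinarith

theorem pow_le_ncard_of_forall_cons [Finite V] {P : ∀ k, (Fin k → V) → Prop} {m l : ℕ}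
    (h0 : P 0 Fin.elim0)
    (hcons : ∀ k < l, ∀ t, P k t → m ≤ {v | P (k + 1) (Fin.cons v t)}.ncard) :
    m ^ l ≤ {t | P l t}.ncard := by
  classical
  have := Fintype.ofFinite V
  induction l with
  | zero =>
    have : {t | P 0 t}.Nonempty := ⟨_, h0⟩
    simpa [Nat.one_le_iff_ne_zero] using this.ncard_pos.ne'
  | succ k ih =>
    have hk := ih fun j hj => hcons j (hj.trans k.lt_succ_self)
    simp only [Set.ncard_eq_toFinset_card', Set.toFinset_ofPred] at hcons hk ⊢
    have hfibre : #{t | P k t} * m ≤ #{t | P (k + 1) t} * 1 := by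
      refine card_mul_le_card_mul (s := {t | P k t}) (t := {t | P (k + 1) t})
        (fun t t' => Fin.tail t' = t) (fun t ht => ?_) fun t' _ => ?_
      · refine (hcons k k.lt_succ_self t (by simpa using ht)).trans ?_
        refine card_le_card_of_injOn (fun v => Fin.cons v t) ?_
          (fun v _ w _ h => (Fin.cons_injective2 h).1)
        intro v hv
        simpa [bipartiteAbove] using hv
      · exact card_le_one.2 fun s hs t ht => (mem_filter.1 hs).2.symm.trans (mem_filter.1 ht).2
    calc
      m ^ (k + 1) = m ^ k * m := pow_succ m k
      _ ≤ #{t | P k t} * m := Nat.mul_le_mul_right m hk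
      _ ≤ #{t | P (k + 1) t} := by simpa using hfibre

end Counting

section Rainbow

variable {V K : Type*} {G : SimpleGraph V} {c : Sym2 V → K} {v : V}

/-- `S` is the vertex set of a rainbow copy of `K_r` in `G` with edges coloured by `c`: the version
of `RainbowClique` for arbitrary vertices and colours, with colours attached to unordered pairs. -/
def IsRainbowClique (G : SimpleGraph V) (c : Sym2 V → K) (r : ℕ) (S : Finset V) : Prop :=
  G.IsNClique r S ∧ Set.InjOn c (G.edgeSet ∩ S.sym2)

/-- The number of colours on the edges at `v`, or `0` if there are infinitely many. -/
noncomputable def colourDegree (G : SimpleGraph V) (c : Sym2 V → K) (v : V) : ℕ :=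
  ((fun w => c s(v, w)) '' G.neighborSet v).ncard

/-- The edges from `v` to `O` form a rainbow star in `G`. -/
structure IsRainbowStar (G : SimpleGraph V) (c : Sym2 V → K) (v : V) (O : Finset V) : Prop where
  adj : ∀ w ∈ O, G.Adj v w
  injOn : Set.InjOn (fun w => c s(v, w)) O

theorem rainbowClique_iff_isRainbowClique {n : ℕ} {G : SimpleGraph (Fin n)}
    {c : Fin n → Fin n → ℕ} (hc : ∀ u v, c u v = c v u) {r : ℕ} {S : Finset (Fin n)} :
    RainbowClique G c r S ↔ IsRainbowClique G (Sym2.lift ⟨c, hc⟩) r S := by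
  have pair_eq_iff : ∀ a b a' b' : Fin n, ({a, b} : Finset (Fin n)) = {a', b'} ↔
      s(a, b) = s(a', b') := fun a b a' b' => by
    rw [← coe_inj, coe_pair, coe_pair, Set.pair_eq_pair_iff, Sym2.eq_iff]
  constructor
  · rintro ⟨hcard, hadj, hcol⟩
    refine ⟨⟨fun a ha b hb => hadj a ha b hb, hcard⟩, ?_⟩
    rintro ⟨a, b⟩ ⟨hab, habS⟩ ⟨a', b'⟩ ⟨hab', habS'⟩ heq
    obtain ⟨ha, hb⟩ := mk_mem_sym2_iff.1 habS
    obtain ⟨ha', hb'⟩ := mk_mem_sym2_iff.1 habS'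
    by_contra hne
    exact hcol a ha b hb a' ha' b' hb' hab.ne hab'.ne (mt (pair_eq_iff a b a' b').1 hne) heq
  · rintro ⟨⟨hclique, hcard⟩, hinj⟩
    have hadj : ∀ a ∈ S, ∀ b ∈ S, a ≠ b → G.Adj a b := fun a ha b hb => hclique ha hb
    refine ⟨hcard, hadj, fun a ha b hb a' ha' b' hb' hab hab' hne heq => hne ?_⟩
    exact (pair_eq_iff a b a' b').2 <| hinj
      ⟨hadj a ha b hb hab, mk_mem_sym2_iff.2 ⟨ha, hb⟩⟩
      ⟨hadj a' ha' b' hb' hab', mk_mem_sym2_iff.2 ⟨ha', hb'⟩⟩ heq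

theorem isRainbowClique_singleton : IsRainbowClique G c 1 {v} := by
  refine ⟨SimpleGraph.isNClique_singleton.2 rfl, ?_⟩
  rintro e ⟨he, hev⟩
  obtain rfl : e = s(v, v) := by rwa [sym2_singleton, coe_singleton] at hev
  exact absurd he G.irrefl

theorem IsRainbowClique.insert_vertex [DecidableEq V] {r : ℕ} {S : Finset V}
    (hS : IsRainbowClique G c r S) (hadj : ∀ p ∈ S, G.Adj v p)
    (hstar : Set.InjOn (fun p => c s(v, p)) S)
    (hnew : ∀ p ∈ S, ∀ e ∈ G.edgeSet ∩ S.sym2, c s(v, p) ≠ c e) :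
    IsRainbowClique G c (r + 1) (insert v S) := by
  refine ⟨hS.1.insert hadj, ?_⟩
  have edge_cases : ∀ e ∈ G.edgeSet ∩ (insert v S).sym2,
      (∃ p ∈ S, e = s(v, p)) ∨ e ∈ G.edgeSet ∩ S.sym2 := by
    rintro e ⟨heG, he⟩
    rw [sym2_insert, coe_union, Set.mem_union, mem_coe, mem_image, exists_mem_insert] at he
    rcases he with (rfl | ⟨p, hp, rfl⟩) | he
    · exact absurd heG G.irrefl
    · exact Or.inl ⟨p, hp, rfl⟩
    · exact Or.inr ⟨heG, he⟩
  intro e he e' he' heq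
  rcases edge_cases e he with ⟨p, hp, rfl⟩ | he <;>
    rcases edge_cases e' he' with ⟨q, hq, rfl⟩ | he'
  · rw [hstar hp hq heq]
  · exact absurd heq (hnew p hp e' he')
  · exact absurd heq.symm (hnew q hq e he)
  · exact hS.2 he he' heq

theorem exists_isRainbowStar_card_eq_colourDegree [Finite V] (G : SimpleGraph V) (c : Sym2 V → K)
    (v : V) : ∃ O, IsRainbowStar G c v O ∧ #O = colourDegree G c v := by
  obtain ⟨O, hO, hbij⟩ := Set.exists_subset_bijOn (G.neighborSet v) fun w => c s(v, w)
  lift O to Finset V using O.toFinite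
  refine ⟨O, ⟨fun w hw => hO hw, hbij.injOn⟩, ?_⟩
  rw [colourDegree, ← hbij.image_eq, hbij.injOn.ncard_image, Set.ncard_coe_finset]

theorem colourDegree_le_card [Fintype V] (G : SimpleGraph V) (c : Sym2 V → K) (v : V) :
    colourDegree G c v ≤ Fintype.card V := by
  obtain ⟨O, -, hO⟩ := exists_isRainbowStar_card_eq_colourDegree G c v
  exact hO ▸ card_le_univ O

theorem IsRainbowStar.card_filter_colour_eq_le_one [DecidableEq K] {O : Finset V}
    (hO : IsRainbowStar G c v O) (k : K) : #{w ∈ O | c s(v, w) = k} ≤ 1 := by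
  refine card_le_one.2 fun p hp q hq => ?_
  rw [mem_filter] at hp hq
  exact hO.injOn hp.1 hq.1 (hp.2.trans hq.2.symm)

end Rainbow

section Greedy

variable {V K : Type*} [DecidableEq K] {G : SimpleGraph V} {c : Sym2 V → K}
  {O : V → Finset V} {S Z : Finset V} {v w z : V} {a d k m q : ℕ}

/-- The leaves of the star `O v` left after dropping the colours of the pairs `{v, z}`, `z ∈ Z`: the
out-neighbourhood of `v` in the digraph of the greedy construction. -/
def trimmedStar (c : Sym2 V → K) (O : V → Finset V) (Z : Finset V) (v : V) : Finset V :=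
  {w ∈ O v | ∀ z ∈ Z, c s(v, w) ≠ c s(v, z)}

theorem mem_trimmedStar :
    w ∈ trimmedStar c O Z v ↔ w ∈ O v ∧ ∀ z ∈ Z, c s(v, w) ≠ c s(v, z) :=
  mem_filter

theorem IsRainbowStar.injOn_insert_trimmedStar (hO : IsRainbowStar G c v (O v)) (hz : z ∈ Z) :
    Set.InjOn (fun w => c s(v, w)) (insert z (trimmedStar c O Z v)) := by
  rintro p (rfl | hp) q (rfl | hq) heq
  · rfl
  · exact absurd heq.symm ((mem_trimmedStar.1 hq).2 p hz)
  · exact absurd heq ((mem_trimmedStar.1 hp).2 q hz)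
  · exact hO.injOn (mem_trimmedStar.1 hp).1 (mem_trimmedStar.1 hq).1 heq

variable [DecidableEq V]

theorem IsRainbowStar.card_filter_notMem_trimmedStar_le [Fintype V]
    (hO : IsRainbowStar G c v (O v)) : #{w | w ∉ trimmedStar c O Z v} ≤ #(O v)ᶜ + #Z := by
  have hcover : ({w | w ∉ trimmedStar c O Z v} : Finset V) ⊆
      (O v)ᶜ ∪ Z.biUnion fun z => {w ∈ O v | c s(v, w) = c s(v, z)} := by
    intro w
    simp only [mem_trimmedStar, mem_union, mem_compl, mem_biUnion, mem_filter]
    push Not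
    tauto
  calc
    _ ≤ #(O v)ᶜ + #(Z.biUnion fun z => {w ∈ O v | c s(v, w) = c s(v, z)}) :=
      (card_le_card hcover).trans (card_union_le _ _)
    _ ≤ #(O v)ᶜ + #Z * 1 := by
      gcongr
      exact card_biUnion_le_card_mul _ _ _ fun z _ => hO.card_filter_colour_eq_le_one _
    _ = #(O v)ᶜ + #Z := by rw [mul_one]

/-- The vertices by which the partial connector `S` of the vertices in `Z` may be extended, up to
clashes of colours. -/
def candidates [Fintype V] (c : Sym2 V → K) (O : V → Finset V) (Z S : Finset V) : Finset V :=
  {w | (∀ z ∈ Z, w ∈ O z) ∧ ∀ s ∈ S, w ∈ trimmedStar c O Z s ∧ s ∈ trimmedStar c O Z w}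

theorem mem_candidates [Fintype V] : w ∈ candidates c O Z S ↔ (∀ z ∈ Z, w ∈ O z) ∧
    ∀ s ∈ S, w ∈ trimmedStar c O Z s ∧ s ∈ trimmedStar c O Z w :=
  mem_filter_univ w

theorem candidates_insert [Fintype V] : candidates c O Z (insert v S) =
    {w ∈ candidates c O Z S | w ∈ trimmedStar c O Z v ∧ v ∈ trimmedStar c O Z w} := by
  ext w
  simp only [mem_candidates, mem_filter, forall_mem_insert]
  tauto

/-- The leaves of the stars centred in `P` whose colour already occurs on a pair inside `P`. -/
def clashing (c : Sym2 V → K) (O : V → Finset V) (P : Finset V) : Finset V :=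
  (P ×ˢ P.sym2).biUnion fun x => {w ∈ O x.1 | c s(x.1, w) = c x.2}

theorem card_clashing_le (hO : ∀ v, IsRainbowStar G c v (O v)) (P : Finset V) :
    #(clashing c O P) ≤ #P * (#P + 1).choose 2 :=
  calc
    #(clashing c O P) ≤ #(P ×ˢ P.sym2) * 1 :=
      card_biUnion_le_card_mul _ _ _ fun x _ => (hO x.1).card_filter_colour_eq_le_one _
    _ = #P * (#P + 1).choose 2 := by rw [mul_one, card_product, card_sym2]

theorem IsRainbowClique.insert_candidate [Fintype V] (hO : ∀ v, IsRainbowStar G c v (O v))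
    (hS : IsRainbowClique G c k (insert z S)) (hz : z ∈ Z) (hv : v ∈ candidates c O Z S)
    (hclash : v ∉ clashing c O (Z ∪ S)) :
    IsRainbowClique G c (k + 1) (insert z (insert v S)) := by
  obtain ⟨hvZ, hvS⟩ := mem_candidates.1 hv
  have hleaf : ∀ p ∈ insert z S, v ∈ O p :=
    forall_mem_insert _ _ _ |>.2 ⟨hvZ z hz, fun p hp => (mem_trimmedStar.1 (hvS p hp).1).1⟩
  have hsub : insert z S ⊆ Z ∪ S :=
    insert_subset (mem_union_left S hz) subset_union_right
  have hS_sub : (insert z S : Finset V) ⊆ insert z (trimmedStar c O Z v) :=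
    insert_subset_insert z fun s hs => (hvS s hs).2
  rw [insert_comm]
  refine hS.insert_vertex (fun p hp => ((hO p).adj v (hleaf p hp)).symm) ?_ ?_
  · refine ((hO v).injOn_insert_trimmedStar hz).mono ?_
    exact_mod_cast hS_sub
  · rintro p hp e ⟨-, he⟩ heq
    refine hclash (mem_biUnion.2 ⟨(p, e), ?_, ?_⟩)
    · exact mem_product.2 ⟨hsub hp, sym2_mono hsub he⟩
    · exact mem_filter.2 ⟨hleaf p hp, by rwa [Sym2.eq_swap]⟩

theorem le_card_filter_candidates_insert [Fintype V]
    (hmiss : ∀ v, #{w | w ∉ trimmedStar c O Z v} ≤ a)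
    (hS : (m + 1) * (2 * a + d) ≤ #(candidates c O Z S) + 2 * a) :
    d ≤ #{v ∈ candidates c O Z S |
      m * (2 * a + d) ≤ #(candidates c O Z (insert v S)) + 2 * a} := by
  simp only [candidates_insert]
  refine le_card_filter_le_card_mutual (fun v w => w ∈ trimmedStar c O Z v) (fun v _ => ?_) ?_
  · exact (card_le_card (filter_subset_filter _ (subset_univ _))).trans (hmiss v)
  · linarith [add_one_mul m (2 * a + d)]

theorem le_ncard_extensions [Fintype V] (hO : ∀ v, IsRainbowStar G c v (O v))
    (hmiss : ∀ v, #(O v)ᶜ + #Z ≤ a) (hq : #(Z ∪ S) ≤ q)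
    (hclique : ∀ z ∈ Z, IsRainbowClique G c k (insert z S))
    (hcand : (m + 1) * (2 * a + d) ≤ #(candidates c O Z S) + 2 * a) :
    d - q * (q + 1).choose 2 ≤ {v | (∀ z ∈ Z, IsRainbowClique G c (k + 1) (insert z (insert v S))) ∧
      m * (2 * a + d) ≤ #(candidates c O Z (insert v S)) + 2 * a}.ncard := by
  set many := {v ∈ candidates c O Z S |
    m * (2 * a + d) ≤ #(candidates c O Z (insert v S)) + 2 * a}
  have hmany : d ≤ #many := le_card_filter_candidates_insert
    (fun v => (hO v).card_filter_notMem_trimmedStar_le.trans (hmiss v)) hcand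
  have hclash : #(clashing c O (Z ∪ S)) ≤ q * (q + 1).choose 2 :=
    (card_clashing_le hO _).trans <|
      Nat.mul_le_mul hq (Nat.choose_le_choose 2 (Nat.succ_le_succ hq))
  calc
    d - q * (q + 1).choose 2 ≤ #many - #(clashing c O (Z ∪ S)) := tsub_le_tsub hmany hclash
    _ ≤ #(many \ clashing c O (Z ∪ S)) := le_card_sdiff _ _
    _ ≤ _ := by
      rw [← Set.ncard_coe_finset]
      refine Set.ncard_le_ncard fun v hv => ?_
      obtain ⟨hvmany, hvclash⟩ := mem_sdiff.1 hv
      obtain ⟨hvcand, hvlarge⟩ := mem_filter.1 hvmany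
      exact ⟨fun z hz => (hclique z hz).insert_candidate hO hz hvcand hvclash, hvlarge⟩

end Greedy

section Connectors

variable {V K : Type*} [DecidableEq V] {G : SimpleGraph V} {c : Sym2 V → K}

/-- The tuples that complete each vertex of `Z` to a rainbow copy of `K_r`. For `Z = {x, y}` these
are the `(x, y; K_r)`-connectors of length 1. -/
def connectors (G : SimpleGraph V) (c : Sym2 V → K) (r : ℕ) (Z : Finset V) :
    Set (Fin (r - 1) → V) :=
  {t | ∀ z ∈ Z, IsRainbowClique G c r (insert z (univ.image t))}

theorem pow_le_ncard_connectors_of_candidates [Fintype V] [DecidableEq K] {O : V → Finset V}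
    {Z : Finset V} {a d l : ℕ} (hO : ∀ v, IsRainbowStar G c v (O v))
    (hmiss : ∀ v, #(O v)ᶜ + #Z ≤ a) (hcand : l * (2 * a + d) ≤ #(candidates c O Z ∅) + 2 * a) :
    (d - (#Z + l) * (#Z + l + 1).choose 2) ^ l ≤ (connectors G c (l + 1) Z).ncard := by
  let IsExtendable (k : ℕ) (t : Fin k → V) : Prop :=
    (∀ z ∈ Z, IsRainbowClique G c (k + 1) (insert z (univ.image t))) ∧
      (l - k) * (2 * a + d) ≤ #(candidates c O Z (univ.image t)) + 2 * a
  have hempty : IsExtendable 0 Fin.elim0 := by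
    refine ⟨fun z _ => ?_, ?_⟩
    · simpa using isRainbowClique_singleton
    · simpa using hcand
  have hstep : ∀ k < l, ∀ t, IsExtendable k t → d - (#Z + l) * (#Z + l + 1).choose 2 ≤
      {v | IsExtendable (k + 1) (Fin.cons v t)}.ncard := by
    rintro k hk t ⟨hclique, hlarge⟩
    have image_cons (v : V) :
        univ.image (Fin.cons v t : Fin (k + 1) → V) = insert v (univ.image t) := by
      apply coe_injective
      simp
    have hq : #(Z ∪ univ.image t) ≤ #Z + l := by
      have := card_union_le Z (univ.image t)
      have := card_image_le (s := univ) (f := t)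
      rw [card_fin] at this
      omega
    rw [show l - k = l - (k + 1) + 1 by omega] at hlarge
    simpa only [IsExtendable, image_cons] using le_ncard_extensions hO hmiss hq hclique hlarge
  exact (pow_le_ncard_of_forall_cons hempty hstep).trans
    (Set.ncard_le_ncard fun t ht => ht.1)

theorem pow_le_ncard_connectors_pair [Fintype V] {b d l : ℕ}
    (hdeg : ∀ v, Fintype.card V ≤ colourDegree G c v + b)
    (hcard : l * (2 * (b + 2) + d) ≤ Fintype.card V) (x y : V) :
    (d - (2 + l) * (2 + l + 1).choose 2) ^ l ≤ (connectors G c (l + 1) {x, y}).ncard := by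
  classical
  choose O hO hOcard using exists_isRainbowStar_card_eq_colourDegree G c
  have hcompl (v : V) : #(O v)ᶜ ≤ b := by
    rw [card_compl, hOcard]
    exact Nat.sub_le_iff_le_add'.2 (hdeg v)
  have hpair : #{x, y} ≤ 2 := card_le_two
  have hinter : Fintype.card V ≤ #(candidates c O {x, y} ∅) + 2 * b := by
    have : candidates c O {x, y} ∅ = ((O x)ᶜ ∪ (O y)ᶜ)ᶜ := by
      ext w
      simp [mem_candidates]
    have hunion := card_union_le (O x)ᶜ (O y)ᶜ
    rw [this, card_compl]
    linarith [hcompl x, hcompl y, Nat.sub_add_cancel (card_le_univ ((O x)ᶜ ∪ (O y)ᶜ))]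
  refine le_trans ?_ (pow_le_ncard_connectors_of_candidates (a := b + 2) (d := d) hO
    (fun v => add_le_add (hcompl v) hpair) (by linarith))
  gcongr

theorem mul_two_mul_add_le {l b d n : ℕ} {ε : ℝ} (hl : 0 < l)
    (hb : (b : ℝ) ≤ (1 / (2 * l) - ε) * n) (hd : d ≤ ε * n) (hn : 4 ≤ ε * n) :
    l * (2 * (b + 2) + d) ≤ n := by
  have hl' : (0 : ℝ) < l := Nat.cast_pos.2 hl
  have hscale : (l : ℝ) * (2 * ((1 / (2 * l) - ε) * n) + 2 * (ε * n)) = n := by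
    field_simp
    ring
  have hle : (l : ℝ) * (2 * (b + 2) + d) ≤ n := by
    refine le_of_le_of_eq (mul_le_mul_of_nonneg_left ?_ hl'.le) hscale
    linarith
  exact_mod_cast hle

theorem stmt_16_general (r : ℕ) (hr : 2 ≤ r) (ε : ℝ) (hε : 0 < ε) :
    ∃ η : ℝ, 0 < η ∧ ∃ n₀ : ℕ, ∀ (V K : Type*) [Fintype V] [DecidableEq V],
      n₀ ≤ Fintype.card V → ∀ (G : SimpleGraph V) (c : Sym2 V → K),
        (∀ v, (1 - 1 / (2 * ((r : ℝ) - 1)) + ε) * Fintype.card V ≤ colourDegree G c v) →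
        ∀ x y : V, η * (Fintype.card V : ℝ) ^ (r - 1) ≤ (connectors G c r {x, y}).ncard := by
  obtain ⟨l, rfl⟩ := Nat.exists_eq_add_of_le' (one_le_two.trans hr)
  set C := (2 + l) * (2 + l + 1).choose 2
  refine ⟨(ε / 2) ^ l, by positivity, ⌈2 * (C + 2) / ε⌉₊, ?_⟩
  intro V K _ _ hn G c hdeg x y
  set n := Fintype.card V
  have hεn : 2 * ((C : ℝ) + 2) ≤ ε * n := (div_le_iff₀' hε).1 (Nat.ceil_le.1 hn)
  set p := 1 - 1 / (2 * (((l + 1 : ℕ) : ℝ) - 1)) + ε with hp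
  have hceil (v : V) : ⌈p * n⌉₊ ≤ colourDegree G c v := Nat.ceil_le.2 (hdeg v)
  have hceil_le : ⌈p * n⌉₊ ≤ n := (hceil x).trans (colourDegree_le_card G c x)
  have hb : ((n - ⌈p * n⌉₊ : ℕ) : ℝ) ≤ (1 / (2 * l) - ε) * n := by
    rw [Nat.cast_sub hceil_le]
    have := Nat.le_ceil (p * n)
    rw [hp, Nat.cast_add_one, add_sub_cancel_right] at this ⊢
    linarith
  have hsize := mul_two_mul_add_le (Nat.succ_le_succ_iff.1 hr) hb
    (Nat.floor_le (by positivity)) (by linarith [C.cast_nonneg (α := ℝ)])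
  have hcount := pow_le_ncard_connectors_pair
    (fun v => by have := hceil v; omega) hsize x y (G := G) (c := c)
  have hbase : ε / 2 * n ≤ ((⌊ε * n⌋₊ - C : ℕ) : ℝ) := by
    have := Nat.lt_floor_add_one (ε * n)
    have : (⌊ε * n⌋₊ : ℝ) ≤ (⌊ε * n⌋₊ - C : ℕ) + C := mod_cast le_tsub_add
    linarith
  calc
    (ε / 2) ^ l * (n : ℝ) ^ l = (ε / 2 * n) ^ l := (mul_pow _ _ _).symm
    _ ≤ ((⌊ε * n⌋₊ - C : ℕ) : ℝ) ^ l := by gcongr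
    _ ≤ _ := mod_cast hcount

end Connectors

/-- An edge-coloured graph with minimum colour degree at least `(1 - 1/(2(r-1)) + ε)n`
is `(1, η; K_r)`-closed: every pair `x ≠ y` has at least `η n^{r-1}` connectors. -/
theorem stmt_16 (r : ℕ) (hr : 3 ≤ r) (ε : ℝ) (hε : 0 < ε) :
    ∃ η : ℝ, 0 < η ∧ ∃ n₀ : ℕ, ∀ n, n₀ ≤ n →
      ∀ (G : SimpleGraph (Fin n)) (c : Fin n → Fin n → ℕ),
        (∀ u v, c u v = c v u) →
        (∀ v : Fin n, (1 - 1 / (2 * ((r : ℝ) - 1)) + ε) * n ≤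
          (Set.ncard ((c v) '' {w | G.Adj v w}) : ℝ)) →
        ∀ x y : Fin n, x ≠ y →
          η * (n : ℝ) ^ (r - 1) ≤
            (Set.ncard {t : Fin (r - 1) → Fin n |
              RainbowClique G c r (insert x (Finset.image t Finset.univ)) ∧
              RainbowClique G c r (insert y (Finset.image t Finset.univ))} : ℝ) := by
  obtain ⟨η, hη, n₀, h⟩ := stmt_16_general r (by omega) ε hε
  refine ⟨η, hη, n₀, fun n hn G c hc hdeg x y _ => ?_⟩
  simpa [connectors, rainbowClique_iff_isRainbowClique hc] using
    h (Fin n) ℕ (by simpa using hn) G (Sym2.lift ⟨c, hc⟩)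
      (by simpa [colourDegree, SimpleGraph.neighborSet] using hdeg) x y
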